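/- arXiv:quant-ph/0010101 — 2 statements merged into one kernel-verified Lean document; each statement's English description precedes it below -/
import Mathlib

section
/- Let n ≥ 2 and let k ≥ 2 be even. Then every G-invariant homogeneous degree-n polynomial function Q on tensor states in (ℂ^n)^{⊗k} is a scalar multiple of the generalized determinant P_{n,k}: there exists λ ∈ ℂ with Q = λ·P_{n,k}. -/
/-!
The proof uses only invariance under monomial matrices, i.e. the normalizer of the diagonal torus.
Such matrices rescale and permute the coordinates `u^p`, so invariance becomes a relation between
individual coefficients of `Q` (`coeff_of_invariant`).

* Diagonal matrices: in a monomial of `Q` with nonzero coefficient, and in each tensor slot, all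
  values of the index occur equally often; as the degree is `n`, each occurs exactly once
  (`weight_eq_one`). Such a monomial is `∏ h, u^{σ_1(h) ⋯ σ_k(h)}` for a tuple of permutations,
  unique once `σ_1 = 1` (`exists_permExponent`, `permExponent_injOn`).
* Permutation matrices, corrected by a sign to have determinant `1`: the coefficient of this
  monomial is `ε(σ_1) ⋯ ε(σ_k)` times the coefficient of `∏ h, u^{h ⋯ h}` (`coeff_permExponent`).

Summing over the monomials gives `Q = λ P_{n,k}` with `λ` the coefficient of `∏ h, u^{h ⋯ h}`.
-/


open MvPolynomial

/-- Action of `SL(n,ℂ)^k` on tensor states in `(ℂ^n)^{⊗k}`, the `m`-th factor acting on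
the `m`-th tensor slot. -/
noncomputable def actTensor {n k : ℕ} (g : Fin k → Matrix.SpecialLinearGroup (Fin n) ℂ)
    (u : (Fin k → Fin n) → ℂ) : (Fin k → Fin n) → ℂ :=
  fun p => ∑ q : Fin k → Fin n, (∏ m, ((g m : Matrix (Fin n) (Fin n) ℂ) (p m) (q m))) * u q

/-- The generalized determinant `P_{n,k}`:
`P_{n,k}(u) = Σ_{σ₂,…,σ_k ∈ S_n} ε(σ₂)⋯ε(σ_k) ∏_{h=1}^{n} u^{h σ₂(h) ⋯ σ_k(h)}`,
encoded as a sum over tuples `σ : Fin k → Perm (Fin n)` with `σ 0 = 1`. -/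
noncomputable def genDet (n k : ℕ) (u : (Fin k → Fin n) → ℂ) : ℂ :=
  ∑ σ ∈ Finset.univ.filter
      (fun σ : Fin k → Equiv.Perm (Fin n) => ∀ j : Fin k, (j : ℕ) = 0 → σ j = 1),
    ((∏ j, (Equiv.Perm.sign (σ j) : ℤ)) : ℂ) * ∏ h : Fin n, u (fun j => σ j h)

/-- The matrix with entries `d a` at the positions `(a, τ a)` has determinant `ε(τ) ∏ a, d a`, so
it lies in `SL(n, ℂ)` as soon as this number is `1`. -/
theorem exists_monomial_matrix {n : ℕ} (τ : Equiv.Perm (Fin n)) (d : Fin n → ℂ)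
    (h : (Equiv.Perm.sign τ : ℤ) * ∏ a, d a = (1 : ℂ)) :
    ∃ g : Matrix.SpecialLinearGroup (Fin n) ℂ,
      ∀ a b, (g : Matrix (Fin n) (Fin n) ℂ) a b = if τ a = b then d a else 0 := by
  refine ⟨⟨Matrix.diagonal d * τ.permMatrix ℂ, ?_⟩, fun a b => ?_⟩
  · rw [Matrix.det_mul, Matrix.det_diagonal, Matrix.det_permutation, mul_comm]
    exact h
  · simp [Matrix.diagonal_mul, Equiv.Perm.permMatrix, PEquiv.toMatrix_apply, eq_comm]

/-- Monomial matrices act on tensor states by rescaling and permuting coordinates. -/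
theorem actTensor_monomial {n k : ℕ} (τ : Fin k → Equiv.Perm (Fin n)) (d : Fin k → Fin n → ℂ)
    (g : Fin k → Matrix.SpecialLinearGroup (Fin n) ℂ)
    (hg : ∀ j a b, (g j : Matrix (Fin n) (Fin n) ℂ) a b = if τ j a = b then d j a else 0)
    (u : (Fin k → Fin n) → ℂ) (p : Fin k → Fin n) :
    actTensor g u p = (∏ j, d j (p j)) * u (fun j => τ j (p j)) := by
  unfold actTensor
  rw [Finset.sum_eq_single (fun j => τ j (p j))]
  · simp [hg]
  · intro q _ hq
    obtain ⟨j, hj⟩ := Function.ne_iff.mp hq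
    rw [Finset.prod_eq_zero (Finset.mem_univ j), zero_mul]
    rw [hg, if_neg (Ne.symm hj)]
  · simp

/-- The torus weight of a monomial: if `m` is the exponent vector of `∏ p, (u^p)^(m p)`, then
`weight m j a` counts, with multiplicity, the factors whose `j`-th index equals `a`. -/
def weight {n k : ℕ} (m : (Fin k → Fin n) →₀ ℕ) (j : Fin k) (a : Fin n) : ℕ :=
  ∑ p : Fin k → Fin n with p j = a, m p

/-- The substitution `X p ↦ c p · X (e p)` sends each monomial to a multiple of one monomial. -/
theorem coeff_monomial_subst {ι : Type*} [Fintype ι] (c : ι → ℂ) (e : ι ≃ ι)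
    (Q : MvPolynomial ι ℂ) (m : ι →₀ ℕ) :
    coeff (m.mapDomain e) (bind₁ (fun p => C (c p) * X (e p)) Q)
      = (∏ p, c p ^ m p) * coeff m Q := by
  classical
  have key : ∀ (s : ι →₀ ℕ) (r : ℂ), bind₁ (fun p => C (c p) * X (e p)) (monomial s r)
      = monomial (s.mapDomain e) ((∏ p, c p ^ s p) * r) := by
    intro s r
    have h := rename_monomial e s ((∏ p, c p ^ s p) * r)
    rw [← h, monomial_eq, bind₁, aeval_def]
    simp only [monomial_eq, map_mul, Finsupp.prod_fintype, pow_zero, map_prod, map_pow, eval₂_mul,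
      eval₂_C, rename_C, rename_X, algebraMap_eq, implies_true, eval₂_prod, eval₂_pow, eval₂_X,
      mul_pow, Finset.prod_mul_distrib]
    ring
  induction Q using MvPolynomial.induction_on' with
  | monomial s r =>
    rw [key, coeff_monomial, coeff_monomial]
    by_cases hs : s = m
    · simp [hs]
    · rw [if_neg, if_neg hs, mul_zero]
      exact fun h => hs (Finsupp.mapDomain_injective e.injective h)
  | add p q hp hq => simp [hp, hq, mul_add]

/-- A tuple of diagonal matrices scales a monomial by a factor depending only on its weights. -/
theorem prod_pow_eq_weight {n k : ℕ} (d : Fin k → Fin n → ℂ) (m : (Fin k → Fin n) →₀ ℕ) :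
    ∏ p : Fin k → Fin n, (∏ j, d j (p j)) ^ m p = ∏ j, ∏ a, d j a ^ weight m j a := by
  simp_rw [← Finset.prod_pow]
  rw [Finset.prod_comm]
  refine Finset.prod_congr rfl fun j _ => ?_
  rw [← Finset.prod_fiberwise (s := Finset.univ) (g := fun p : Fin k → Fin n => p j)]
  refine Finset.prod_congr rfl fun a _ => ?_
  rw [weight, ← Finset.prod_pow_eq_pow_sum]
  refine Finset.prod_congr rfl fun p hp => ?_
  rw [(Finset.mem_filter.mp hp).2]

/-- Invariance under a tuple of monomial matrices in `SL(n, ℂ)`, read off on the coefficients. -/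
theorem coeff_of_invariant {n k : ℕ} {Q : MvPolynomial (Fin k → Fin n) ℂ}
    (hinv : ∀ (g : Fin k → Matrix.SpecialLinearGroup (Fin n) ℂ) (u : (Fin k → Fin n) → ℂ),
      eval (actTensor g u) Q = eval u Q)
    (τ : Fin k → Equiv.Perm (Fin n)) (d : Fin k → Fin n → ℂ)
    (hd : ∀ j, (Equiv.Perm.sign (τ j) : ℤ) * ∏ a, d j a = (1 : ℂ))
    (m : (Fin k → Fin n) →₀ ℕ) :
    coeff (m.mapDomain fun p j => τ j (p j)) Q
      = (∏ j, ∏ a, d j a ^ weight m j a) * coeff m Q := by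
  choose g hg using fun j => exists_monomial_matrix (τ j) (d j) (hd j)
  have hQ : bind₁ (fun p => C (∏ j, d j (p j)) * X (Equiv.piCongrRight τ p)) Q = Q := by
    refine MvPolynomial.funext fun u => ?_
    rw [← hinv g u, eval, eval, eval₂Hom_bind₁]
    congr 2
    funext p
    rw [actTensor_monomial τ d g hg, map_mul, eval₂Hom_C, eval₂Hom_X']
    rfl
  rw [← prod_pow_eq_weight, ← coeff_monomial_subst _ (Equiv.piCongrRight τ), hQ]
  rfl

/-- The exponent vector of the monomial `∏ h, u^{σ_1(h) ⋯ σ_k(h)}`. All `k` permutations are kept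
here; simultaneous relabelling of `h` gives the same monomial, so one of them has to be normalized
to `1` for a unique description. -/
noncomputable def permExponent {n k : ℕ} (σ : Fin k → Equiv.Perm (Fin n)) :
    (Fin k → Fin n) →₀ ℕ :=
  ∑ h, Finsupp.single (fun j => σ j h) 1

/-- In `permExponent σ` at most one `h` can contribute to the value at `p`; any slot `i`
identifies it as the `h` with `σ_i(h) = p_i`. -/
theorem permExponent_apply {n k : ℕ} (σ : Fin k → Equiv.Perm (Fin n)) (i : Fin k)
    (p : Fin k → Fin n) :
    permExponent σ p = if (fun j => σ j ((σ i).symm (p i))) = p then 1 else 0 := by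
  rw [permExponent, Finsupp.finsetSum_apply, Finset.sum_eq_single ((σ i).symm (p i))]
  · rw [Finsupp.single_apply]
  · intro h _ hh
    rw [Finsupp.single_apply, if_neg]
    rintro rfl
    simp at hh
  · simp

theorem weight_permExponent {n k : ℕ} (σ : Fin k → Equiv.Perm (Fin n)) (i : Fin k) (a : Fin n) :
    weight (permExponent σ) i a = 1 := by
  rw [weight, Finset.sum_eq_single_of_mem (fun j => σ j ((σ i).symm a))]
  · simp [permExponent_apply σ i]
  · simp
  · intro p hp hne
    rw [permExponent_apply σ i, if_neg]
    rw [(Finset.mem_filter.mp hp).2]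
    exact hne.symm

theorem permExponent_injOn {n k : ℕ} (i : Fin k) {σ τ : Fin k → Equiv.Perm (Fin n)}
    (hσ : σ i = 1) (hτ : τ i = 1) (h : permExponent σ = permExponent τ) : σ = τ := by
  funext j
  ext a
  have h1 := permExponent_apply σ i (fun j => σ j a)
  rw [h, permExponent_apply τ i] at h1
  simp only [hσ, hτ, Equiv.Perm.one_symm, Equiv.Perm.one_apply, if_true] at h1
  have h2 := congrFun (by_contra fun hne => by simp [hne] at h1 : (fun j => τ j a) = (fun j => σ j a)) j
  exact congrArg Fin.val h2.symm

/-- A monomial in which every value occurs exactly once in every slot comes from a tuple of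
permutations: list its factors by their `i`-th index and read off the other indices. -/
theorem exists_permExponent {n k : ℕ} (i : Fin k) (m : (Fin k → Fin n) →₀ ℕ)
    (hm : ∀ j a, weight m j a = 1) :
    ∃ σ : Fin k → Equiv.Perm (Fin n), σ i = 1 ∧ m = permExponent σ := by
  -- Two different factors cannot share an index in any slot, since they would give weight `≥ 2`.
  have huniq : ∀ {j p q}, m p ≠ 0 → m q ≠ 0 → p j = q j → p = q := by
    intro j p q hp hq hpq
    by_contra hne
    have h1 : ∑ r ∈ ({p, q} : Finset (Fin k → Fin n)), m r ≤ weight m j (q j) := by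
      refine Finset.sum_le_sum_of_subset ?_
      intro r hr
      simp only [Finset.mem_insert, Finset.mem_singleton] at hr
      rcases hr with rfl | rfl <;> simp [hpq]
    rw [Finset.sum_pair hne, hm] at h1
    omega
  have hex : ∀ a, ∃ p : Fin k → Fin n, p i = a ∧ m p ≠ 0 := by
    intro a
    have h1 : weight m i a ≠ 0 := by simp [hm]
    obtain ⟨p, hp, hp'⟩ := Finset.exists_ne_zero_of_sum_ne_zero h1
    exact ⟨p, (Finset.mem_filter.mp hp).2, hp'⟩
  choose P hPi hPm using hex
  have hinj : ∀ j, Function.Injective fun h => P h j := fun j a b hab => by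
    rw [← hPi a, ← hPi b, huniq (hPm a) (hPm b) hab]
  let σ : Fin k → Equiv.Perm (Fin n) := fun j =>
    Equiv.ofBijective (fun h => P h j) (Finite.injective_iff_bijective.mp (hinj j))
  have hσ : ∀ j h, σ j h = P h j := fun _ _ => rfl
  have hσi : σ i = 1 := Equiv.ext fun a => (hσ i a).trans (hPi a)
  refine ⟨σ, hσi, Finsupp.ext fun p => ?_⟩
  rw [permExponent_apply σ i, hσi]
  simp only [hσ, Equiv.Perm.one_symm, Equiv.Perm.one_apply]
  split_ifs with hp
  · have h1 : m p ≤ weight m i (p i) :=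
      Finset.single_le_sum (f := fun r => m r) (fun _ _ => Nat.zero_le _) (by simp)
    have h2 := hPm (p i)
    rw [hm] at h1
    rw [show P (p i) = p from hp] at h2
    omega
  · by_contra h0
    exact hp (huniq (j := i) (hPm (p i)) h0 (hPi _))

/-- Torus invariance: the weights in each slot are all equal, and they add up to the degree `n`. -/
theorem weight_eq_one {n k : ℕ} {Q : MvPolynomial (Fin k → Fin n) ℂ}
    (hhom : Q.IsHomogeneous n)
    (hinv : ∀ (g : Fin k → Matrix.SpecialLinearGroup (Fin n) ℂ) (u : (Fin k → Fin n) → ℂ),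
      eval (actTensor g u) Q = eval u Q)
    {m : (Fin k → Fin n) →₀ ℕ} (hm : coeff m Q ≠ 0) (i : Fin k) (a : Fin n) :
    weight m i a = 1 := by
  have heq : ∀ b, weight m i b = weight m i a := by
    intro b
    by_cases hba : b = a
    · rw [hba]
    -- The diagonal matrix with entries `2` at `a`, `1/2` at `b` and `1` elsewhere, placed in slot `i`.
    let f : Fin n → ℂ := Function.update (Function.update 1 a 2) b 2⁻¹
    have hf : ∀ w : Fin n → ℕ, ∏ c, f c ^ w c = 2 ^ w a * 2⁻¹ ^ w b := by
      intro w
      rw [Finset.prod_eq_mul a b (Ne.symm hba)]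
      · simp [f, Function.update_of_ne (Ne.symm hba)]
      · rintro c - ⟨hca, hcb⟩
        simp [f, hca, hcb]
      · simp
      · simp
    have h := coeff_of_invariant hinv 1 (Function.update 1 i f) (fun j => by
      by_cases hj : j = i
      · subst hj
        have := hf 1
        simp at this
        simp [this]
      · simp [hj]) m
    rw [Finset.prod_eq_single i (fun j _ hj => by simp [hj]) (by simp), Function.update_self,
      hf (weight m i)] at h
    simp only [Pi.one_apply, Equiv.Perm.one_apply] at h
    rw [show (fun (p : Fin k → Fin n) j => p j) = id from rfl, Finsupp.mapDomain_id] at h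
    have h1 := (mul_eq_right₀ hm).mp h.symm
    rw [inv_pow, mul_inv_eq_one₀ (by simp)] at h1
    have h2 : (2 : ℕ) ^ weight m i a = 2 ^ weight m i b := by exact_mod_cast h1
    exact (Nat.pow_right_injective le_rfl h2).symm
  have htot : ∑ b, weight m i b = n := by
    unfold weight
    have h := hhom hm
    rw [Finsupp.weight_apply, Finsupp.sum_fintype _ _ (by simp)] at h
    rw [Finset.sum_fiberwise]
    simpa using h
  simp only [heq, Finset.sum_const, Finset.card_univ, Fintype.card_fin, smul_eq_mul] at htot
  exact Nat.eq_of_mul_eq_mul_left (Fin.pos a) (by rw [htot, mul_one])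

/-- The monomial of `σ` is carried from that of the identity tuple by permutation matrices, with
one nonzero entry changed to `ε(σ_j)` so that the determinant is `1`. -/
theorem coeff_permExponent {n k : ℕ} (hn : 2 ≤ n) {Q : MvPolynomial (Fin k → Fin n) ℂ}
    (hinv : ∀ (g : Fin k → Matrix.SpecialLinearGroup (Fin n) ℂ) (u : (Fin k → Fin n) → ℂ),
      eval (actTensor g u) Q = eval u Q)
    (σ : Fin k → Equiv.Perm (Fin n)) :
    coeff (permExponent σ) Q
      = (∏ j, ((Equiv.Perm.sign (σ j) : ℤ) : ℂ)) * coeff (permExponent 1) Q := by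
  let a₀ : Fin n := ⟨0, by omega⟩
  have hprod : ∀ j, ∏ a, Function.update (1 : Fin n → ℂ) a₀ ((Equiv.Perm.sign (σ j) : ℤ) : ℂ) a
      = ((Equiv.Perm.sign (σ j) : ℤ) : ℂ) := by
    intro j
    rw [Finset.prod_eq_single a₀ (fun a _ ha => by simp [ha]) (by simp), Function.update_self]
  have h := coeff_of_invariant hinv σ
    (fun j => Function.update 1 a₀ ((Equiv.Perm.sign (σ j) : ℤ) : ℂ)) (fun j => by
      rw [hprod, ← Int.cast_mul, ← Units.val_mul, Int.units_mul_self]; simp) (permExponent 1)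
  simp only [weight_permExponent, pow_one, hprod] at h
  rw [← h]
  congr 1
  simp only [permExponent, Finsupp.mapDomain_finsetSum, Finsupp.mapDomain_single]
  rfl

/-- For `k ≥ 2` even, every `G`-invariant homogeneous degree-`n` polynomial function on
tensor states in `(ℂ^n)^{⊗k}` is a scalar multiple of the generalized determinant. -/
theorem stmt4 (n k : ℕ) (hn : 2 ≤ n) (hk : 2 ≤ k) (heven : Even k)
    (Q : MvPolynomial (Fin k → Fin n) ℂ) (hhom : Q.IsHomogeneous n)
    (hinv : ∀ (g : Fin k → Matrix.SpecialLinearGroup (Fin n) ℂ) (u : (Fin k → Fin n) → ℂ),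
      MvPolynomial.eval (actTensor g u) Q = MvPolynomial.eval u Q) :
    ∃ lam : ℂ, ∀ u : (Fin k → Fin n) → ℂ, MvPolynomial.eval u Q = lam * genDet n k u := by
  classical
  let i₀ : Fin k := ⟨0, by omega⟩
  set S := Finset.univ.filter
      (fun σ : Fin k → Equiv.Perm (Fin n) => ∀ j : Fin k, (j : ℕ) = 0 → σ j = 1) with hS
  have hmem : ∀ σ, σ ∈ S ↔ σ i₀ = 1 := by
    intro σ
    simp only [hS, Finset.mem_filter, Finset.mem_univ, true_and]
    exact ⟨fun h => h i₀ rfl, fun h j hj => by rwa [show j = i₀ from Fin.ext hj]⟩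
  refine ⟨coeff (permExponent 1) Q, fun u => ?_⟩
  have hsub : Q.support ⊆ S.image permExponent := by
    intro m hm
    obtain ⟨σ, hσ, rfl⟩ := exists_permExponent i₀ m
      (weight_eq_one hhom hinv (mem_support_iff.mp hm))
    exact Finset.mem_image_of_mem _ ((hmem σ).mpr hσ)
  rw [eval_eq', Finset.sum_subset hsub, Finset.sum_image, genDet, Finset.mul_sum]
  · refine Finset.sum_congr rfl fun σ _ => ?_
    have hmon : ∏ p, u p ^ permExponent σ p = ∏ h, u fun j => σ j h := by
      simp_rw [permExponent, Finsupp.finsetSum_apply, ← Finset.prod_pow_eq_pow_sum]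
      rw [Finset.prod_comm]
      simp [Finsupp.single_apply]
    rw [coeff_permExponent hn hinv, hmon]
    ring
  · intro σ hσ τ hτ h
    exact permExponent_injOn i₀ ((hmem σ).mp hσ) ((hmem τ).mp hτ) h
  · intro m _ hm
    rw [notMem_support_iff.mp hm, zero_mul]
end

section
/- Let n ≥ 2 and let k ≥ 2 and l ≥ 2 both be even. For every tensor state v in (ℂ^n)^{⊗k} and every tensor state w in (ℂ^n)^{⊗l}, the generalized determinant of the tensor product v ⊗ w in (ℂ^n)^{⊗(k+l)} (the tensor state with components (v⊗w)^{p_1⋯p_{k+l}} = v^{p_1⋯p_k}·w^{p_{k+1}⋯p_{k+l}}) satisfies P_{n,k+l}(v ⊗ w) = n! · P_{n,k}(v) · P_{n,l}(w). -/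
/-- The summand of the generalized determinant attached to a tuple of permutations. -/
noncomputable def detTerm (n k : ℕ) (u : (Fin k → Fin n) → ℂ)
    (σ : Fin k → Equiv.Perm (Fin n)) : ℂ :=
  ((∏ j, (Equiv.Perm.sign (σ j) : ℤ)) : ℂ) * ∏ h : Fin n, u (fun j => σ j h)

/-- The symmetrised determinant: the sum over all `k`-tuples of permutations, without the
normalisation `σ 0 = 1`. -/
noncomputable def fullDet (n k : ℕ) (u : (Fin k → Fin n) → ℂ) : ℂ :=
  ∑ σ : Fin k → Equiv.Perm (Fin n), detTerm n k u σ

/-- For even `k`, the summands are invariant under right translation of the whole tuple by one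
permutation. -/
lemma detTerm_mul_right (n k : ℕ) (hke : Even k) (u : (Fin k → Fin n) → ℂ)
    (σ : Fin k → Equiv.Perm (Fin n)) (τ : Equiv.Perm (Fin n)) :
    detTerm n k u (fun j => σ j * τ) = detTerm n k u σ := by
  unfold detTerm
  congr 1
  · obtain ⟨m, rfl⟩ := hke
    have h : ((Equiv.Perm.sign τ : ℤ) : ℂ) * ((Equiv.Perm.sign τ : ℤ) : ℂ) = 1 := by
      rcases Int.units_eq_one_or (Equiv.Perm.sign τ) with h | h <;> simp [h]
    simp only [Equiv.Perm.sign_mul, Units.val_mul, Int.cast_mul, Finset.prod_mul_distrib,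
      Finset.prod_const, Finset.card_univ, Fintype.card_fin]
    rw [pow_add, ← mul_pow, h, one_pow, mul_one]
  · exact Equiv.prod_comp τ (fun h => u (fun j => σ j h))

lemma fullDet_eq (n k : ℕ) (hk : 2 ≤ k) (hke : Even k) (u : (Fin k → Fin n) → ℂ) :
    fullDet n k u = (Nat.factorial n : ℂ) * genDet n k u := by
  have hk0 : 0 < k := by omega
  have h0 : ∀ (σ : Fin k → Equiv.Perm (Fin n)),
      (∀ j : Fin k, (j : ℕ) = 0 → σ j = 1) ↔ σ ⟨0, hk0⟩ = 1 := by
    intro σ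
    refine ⟨fun h => h _ rfl, fun h j hj => ?_⟩
    have : j = ⟨0, hk0⟩ := Fin.ext hj
    rw [this, h]
  unfold fullDet
  rw [← Finset.sum_fiberwise Finset.univ (fun σ : Fin k → Equiv.Perm (Fin n) => σ ⟨0, hk0⟩)]
  have key : ∀ τ : Equiv.Perm (Fin n),
      ∑ σ ∈ Finset.univ.filter (fun σ : Fin k → Equiv.Perm (Fin n) => σ ⟨0, hk0⟩ = τ),
        detTerm n k u σ = genDet n k u := by
    intro τ
    refine Finset.sum_nbij' (fun σ j => σ j * τ⁻¹) (fun σ j => σ j * τ) ?_ ?_ ?_ ?_ ?_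
    · intro σ hσ
      rw [Finset.mem_filter] at hσ ⊢
      exact ⟨Finset.mem_univ _, (h0 _).2 (by simp [hσ.2])⟩
    · intro σ hσ
      rw [Finset.mem_filter, h0] at hσ
      simp [hσ.2]
    · intro σ _
      simp
    · intro σ _
      simp
    · intro σ _
      exact (detTerm_mul_right n k hke u σ τ⁻¹).symm
  simp [key, Fintype.card_perm]

lemma fullDet_tensor (n k l : ℕ) (v : (Fin k → Fin n) → ℂ) (w : (Fin l → Fin n) → ℂ) :
    fullDet n (k + l)
        (fun p => v (fun i => p (Fin.castAdd l i)) * w (fun i => p (Fin.natAdd k i)))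
      = fullDet n k v * fullDet n l w := by
  unfold fullDet
  rw [Finset.sum_mul_sum, ← Finset.sum_product', Finset.univ_product_univ]
  refine (Fintype.sum_equiv (Fin.appendEquiv k l) _ _ ?_).symm
  rintro ⟨σ, τ⟩
  simp only [detTerm, Fin.appendEquiv, Equiv.coe_fn_mk, Fin.prod_univ_add, Fin.append_left,
    Fin.append_right, Finset.prod_mul_distrib]
  ring

/-- For `k, l ≥ 2` even, the generalized determinant of a tensor product of tensor states
satisfies `P_{n,k+l}(v ⊗ w) = n! · P_{n,k}(v) · P_{n,l}(w)`. -/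
theorem stmt10 (n k l : ℕ) (hn : 2 ≤ n) (hk : 2 ≤ k) (hl : 2 ≤ l)
    (hke : Even k) (hle : Even l)
    (v : (Fin k → Fin n) → ℂ) (w : (Fin l → Fin n) → ℂ) :
    genDet n (k + l)
        (fun p => v (fun i => p (Fin.castAdd l i)) * w (fun i => p (Fin.natAdd k i)))
      = (Nat.factorial n : ℂ) * genDet n k v * genDet n l w := by
  have h := fullDet_tensor n k l v w
  rw [fullDet_eq n (k + l) (by omega) (hke.add hle), fullDet_eq n k hk hke,
    fullDet_eq n l hl hle] at h
  have hn0 : (Nat.factorial n : ℂ) ≠ 0 := Nat.cast_ne_zero.2 (Nat.factorial_ne_zero n)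
  apply mul_left_cancel₀ hn0
  rw [h]
  ring
end
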